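/- Let n ≥ 2, let K be a closed subset of the unit sphere Sⁿ⁻¹ of ℝⁿ with K ∩ (−K) = ∅, let u_∞ be a unit vector with u_∞ ∉ K and −u_∞ ∉ K, and let b_∞ > 0. Then there exist α₀ > 0, δ > 0 and β > 0 such that for all α > α₀, all b ∈ ℝ with |b − b_∞| ≤ δ, all u ∈ ℝⁿ with ‖u − u_∞‖ ≤ δ, and all x, v ∈ K, one has b·α • x + u ≠ 0 and ‖(b·α • x + u)/‖b·α • x + u‖ + v‖ ≥ β. -/

import Mathlib

open Filter Topology

/-!
For `‖x‖ = 1` and `t > 0`, the normalization of `t • x + u` lies within `2 * ‖u‖ / t` of `x`, so as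
`t → ∞` it tends to `x`, uniformly in `x` and in bounded `u`. Compactness keeps `K` at a positive
distance `c` from `-K`, hence for large `t` the normalized vectors stay at distance at least `c / 2`
from `-K`. For `b` near `b_∞ > 0` and `α` large, `t = b * α` is large.
-/

section Normalize

open NormedSpace

variable {E : Type*} [NormedAddCommGroup E] [NormedSpace ℝ E]

theorem norm_normalize_le_one (x : E) : ‖normalize x‖ ≤ 1 := by
  rcases eq_or_ne x 0 with rfl | hx
  · simp
  · exact (norm_normalize hx).le

theorem norm_mul_norm_normalize_sub_normalize_le (x y : E) :
    ‖y‖ * ‖normalize x - normalize y‖ ≤ 2 * ‖x - y‖ := by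
  have decomposition :
      ‖y‖ • (normalize x - normalize y) = (‖y‖ - ‖x‖) • normalize x + (x - y) := by
    rw [smul_sub, sub_smul, norm_smul_normalize, norm_smul_normalize]
    abel
  calc
    ‖y‖ * ‖normalize x - normalize y‖ = ‖(‖y‖ - ‖x‖) • normalize x + (x - y)‖ := by
      rw [← decomposition, norm_smul, norm_norm]
    _ ≤ |‖y‖ - ‖x‖| * ‖normalize x‖ + ‖x - y‖ := by
      rw [← Real.norm_eq_abs, ← norm_smul]
      exact norm_add_le _ _
    _ ≤ ‖x - y‖ * 1 + ‖x - y‖ := by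
      gcongr
      · rw [norm_sub_rev x y]
        exact abs_norm_sub_norm_le y x
      · exact norm_normalize_le_one x
    _ = 2 * ‖x - y‖ := by ring

theorem norm_normalize_smul_add_sub_le {x : E} (hx : ‖x‖ = 1) {t : ℝ} (ht : 0 < t) (u : E) :
    ‖normalize (t • x + u) - x‖ ≤ 2 * ‖u‖ / t := by
  have h := norm_mul_norm_normalize_sub_normalize_le (t • x + u) (t • x)
  rw [normalize_smul_of_pos ht, normalize_eq_self_of_norm_eq_one hx, add_sub_cancel_left,
    norm_smul, hx, mul_one, Real.norm_of_nonneg ht.le] at h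
  rwa [le_div_iff₀' ht]

theorem eventually_norm_normalize_smul_add_sub_lt (R : ℝ) {ε : ℝ} (hε : 0 < ε) :
    ∀ᶠ t : ℝ in atTop, ∀ x : E, ‖x‖ = 1 → ∀ u : E, ‖u‖ ≤ R →
      ‖normalize (t • x + u) - x‖ < ε := by
  filter_upwards [eventually_gt_atTop 0, eventually_gt_atTop (2 * R / ε)] with t ht htR x hx u hu
  calc
    ‖normalize (t • x + u) - x‖ ≤ 2 * ‖u‖ / t := norm_normalize_smul_add_sub_le hx ht u
    _ ≤ 2 * R / t := by gcongr
    _ < ε := (div_lt_comm₀ hε ht).mp htR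

theorem ne_zero_of_norm_normalize_sub_lt_norm {x y : E} (h : ‖normalize y - x‖ < ‖x‖) : y ≠ 0 := by
  rintro rfl
  simp at h

end Normalize

theorem exists_pos_forall_lt_norm_add {E : Type*} [SeminormedAddCommGroup E] {K L : Set E}
    (hK : IsCompact K) (hL : IsClosed L) (hKL : Disjoint K (-L)) :
    ∃ c > (0 : ℝ), ∀ x ∈ K, ∀ v ∈ L, c < ‖x + v‖ := by
  obtain ⟨c, hc, hsep⟩ := Metric.exists_pos_forall_lt_edist hK hL.neg hKL
  refine ⟨c, hc, fun x hx v hv ↦ ?_⟩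
  have h : (c : ENNReal) < edist x (-v) := hsep x hx (-v) (Set.neg_mem_neg.mpr hv)
  rwa [edist_nndist, ENNReal.coe_lt_coe, ← NNReal.coe_lt_coe, coe_nndist, dist_eq_norm,
    sub_neg_eq_add] at h

section Separation

variable {E : Type*} [NormedAddCommGroup E] [NormedSpace ℝ E] {K L : Set E}

theorem exists_pos_eventually_le_norm_normalize_smul_add_add (hK : IsCompact K)
    (hK_sub : K ⊆ Metric.sphere 0 1) (hL : IsClosed L) (hKL : Disjoint K (-L)) :
    ∃ β > (0 : ℝ), ∀ R : ℝ, ∀ᶠ t : ℝ in atTop, ∀ u : E, ‖u‖ ≤ R → ∀ x ∈ K, ∀ v ∈ L,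
      t • x + u ≠ 0 ∧ β ≤ ‖NormedSpace.normalize (t • x + u) + v‖ := by
  obtain ⟨c, hc, hsep⟩ := exists_pos_forall_lt_norm_add hK hL hKL
  refine ⟨c / 2, half_pos hc, fun R ↦ ?_⟩
  filter_upwards [eventually_norm_normalize_smul_add_sub_lt (E := E) R one_pos,
    eventually_norm_normalize_smul_add_sub_lt (E := E) R (half_pos hc)]
    with t h_one h_half u hu x hx v hv
  have hx_norm : ‖x‖ = 1 := mem_sphere_zero_iff_norm.mp (hK_sub hx)
  refine ⟨ne_zero_of_norm_normalize_sub_lt_norm ((h_one x hx_norm u hu).trans_eq hx_norm.symm), ?_⟩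
  set w := NormedSpace.normalize (t • x + u)
  have h_close : ‖w - x‖ < c / 2 := h_half x hx_norm u hu
  have h_triangle : ‖x + v‖ ≤ ‖w + v‖ + ‖w - x‖ := by
    simpa only [add_sub_sub_cancel, add_comm v x] using norm_sub_le (w + v) (w - x)
  linarith [hsep x hx v hv]

theorem uniform_separation_from_neg_cap_general (hK : IsCompact K)
    (hK_sub : K ⊆ Metric.sphere 0 1) (hL : IsClosed L) (hKL : Disjoint K (-L))
    (uinf : E) {binf : ℝ} (hbinf : 0 < binf) :
    ∃ α₀ > (0 : ℝ), ∃ δ > (0 : ℝ), ∃ β > (0 : ℝ),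
      ∀ α : ℝ, α₀ < α → ∀ b : ℝ, |b - binf| ≤ δ → ∀ u : E, ‖u - uinf‖ ≤ δ →
      ∀ x ∈ K, ∀ v ∈ L,
        (b * α) • x + u ≠ 0 ∧ ‖‖(b * α) • x + u‖⁻¹ • ((b * α) • x + u) + v‖ ≥ β := by
  obtain ⟨β, hβ, hsep⟩ := exists_pos_eventually_le_norm_normalize_smul_add_add hK hK_sub hL hKL
  obtain ⟨T, hT_pos, hT⟩ := (atTop_basis_Ioi' 0).eventually_iff.mp (hsep (‖uinf‖ + binf / 2))
  refine ⟨T / (binf / 2), by positivity, binf / 2, half_pos hbinf, β, hβ, ?_⟩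
  intro α hα b hb u hu
  have hα_pos : 0 < α := lt_of_le_of_lt (by positivity) hα
  have hb_ge : binf / 2 ≤ b := by linarith [(abs_le.mp hb).1]
  have h_large : T < b * α :=
    calc
      T < binf / 2 * α := (div_lt_iff₀' (half_pos hbinf)).mp hα
      _ ≤ b * α := by gcongr
  have hu_norm : ‖u‖ ≤ ‖uinf‖ + binf / 2 := by
    linarith [norm_le_norm_add_norm_sub' u uinf]
  exact hT h_large u hu_norm

end Separation

/-- uniform separation of normalized vectors `(bα • x + u)/‖bα • x + u‖`
from `-K`, for `x ∈ K`, `α` large, and `(b, u)` close to `(b_∞, u_∞)`. -/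
theorem uniform_separation_from_neg_cap
    (n : ℕ) (hn : 2 ≤ n)
    (K : Set (EuclideanSpace ℝ (Fin n)))
    (hK_sub : K ⊆ Metric.sphere (0 : EuclideanSpace ℝ (Fin n)) 1)
    (hK_closed : IsClosed K)
    (hK_disj : K ∩ (-K) = ∅)
    (uinf : EuclideanSpace ℝ (Fin n)) (huinf : ‖uinf‖ = 1)
    (hK_not : uinf ∉ K) (hK_not' : -uinf ∉ K)
    (binf : ℝ) (hbinf : 0 < binf) :
    ∃ α₀ > (0 : ℝ), ∃ δ > (0 : ℝ), ∃ β > (0 : ℝ),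
      ∀ α : ℝ, α₀ < α → ∀ b : ℝ, |b - binf| ≤ δ →
      ∀ u : EuclideanSpace ℝ (Fin n), ‖u - uinf‖ ≤ δ →
      ∀ x ∈ K, ∀ v ∈ K,
        (b * α) • x + u ≠ 0 ∧
        ‖‖(b * α) • x + u‖⁻¹ • ((b * α) • x + u) + v‖ ≥ β := by
  exact uniform_separation_from_neg_cap_general
    ((isCompact_sphere 0 1).of_isClosed_subset hK_closed hK_sub) hK_sub hK_closed
    (Set.disjoint_iff_inter_eq_empty.mpr hK_disj) uinf hbinf
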